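/- Let (M, g, ψ) be a seven-dimensional Riemannian manifold with G₂-structure ψ (a 3-form pointwise linearly equivalent to the standard G₂ 3-form on ℝ⁷). A four-dimensional submanifold X of M is a generalized co-associative calibration, i.e. calibrated with respect to *ψ (so *ψ restricts to the volume form of X), if and only if ψ|_X = 0 (for a suitable orientation of X). -/

import Mathlib

/-!
# Statement 12: characterization of generalized co-associative calibrations

Let (M, g, ψ) be a seven-dimensional Riemannian manifold with G₂-structure ψ (a 3-form
pointwise linearly equivalent to the standard G₂ 3-form on ℝ⁷).  A four-dimensional
submanifold X of M is a generalized co-associative calibration, i.e. calibrated with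
respect to the Hodge dual *ψ (so *ψ restricts to the volume form of X, for a suitable
orientation of X), if and only if ψ|_X = 0.

Fiberwise formulation: as in the other G₂ statements, tangent spaces are 7-dimensional
inner product spaces and the G₂-structure provides pointwise orthonormal coframes carrying
ψ and *ψ to the standard associative and co-associative forms on ℝ⁷.  A 4-dimensional
submanifold is recorded by its point set S and tangent distribution τ; it is calibrated by
*ψ (for a suitable orientation) when at each of its points some orthonormal frame of the
tangent 4-plane evaluates to 1 under *ψ, and ψ|_X = 0 means that ψ vanishes on all triples
of tangent vectors.
-/

noncomputable section

/-- The elementary coordinate k-form `e^{e 0} ∧ ⋯ ∧ e^{e (k-1)}` on `EuclideanSpace ℝ I`. -/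
def elemForm {I : Type*} [Fintype I] [DecidableEq I] {k : ℕ} (e : Fin k → I) :
    (EuclideanSpace ℝ I) [⋀^Fin k]→ₗ[ℝ] ℝ :=
  ((Pi.basisFun ℝ (Fin k)).det).compLinearMap
    (LinearMap.pi fun a => EuclideanSpace.projₗ (e a))

/-- The standard G₂-invariant 3-form on ℝ⁷ (indices 0,…,6). -/
def assocForm : (EuclideanSpace ℝ (Fin 7)) [⋀^Fin 3]→ₗ[ℝ] ℝ :=
  elemForm ![0, 1, 2] + elemForm ![0, 3, 4] - elemForm ![0, 5, 6] +
    elemForm ![1, 3, 5] + elemForm ![1, 4, 6] + elemForm ![2, 3, 6] - elemForm ![2, 4, 5]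

/-- The Hodge dual *ψ₀ of the standard G₂ 3-form: the standard co-associative 4-form. -/
def coassocForm : (EuclideanSpace ℝ (Fin 7)) [⋀^Fin 4]→ₗ[ℝ] ℝ :=
  elemForm ![3, 4, 5, 6] + elemForm ![1, 2, 5, 6] - elemForm ![1, 2, 3, 4] +
    elemForm ![0, 2, 4, 6] + elemForm ![0, 2, 3, 5] + elemForm ![0, 1, 4, 5] -
    elemForm ![0, 1, 3, 6]

/-- A seven-dimensional Riemannian manifold with G₂-structure, presented fiberwise. -/
structure G2StructureManifold where
  M : Type
  T : M → Type
  instN : ∀ p, NormedAddCommGroup (T p)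
  instI : ∀ p, InnerProductSpace ℝ (T p)
  dim : ∀ p, Module.finrank ℝ (T p) = 7
  /-- the G₂ 3-form ψ -/
  ψ : ∀ p, (T p) [⋀^Fin 3]→ₗ[ℝ] ℝ
  /-- the Hodge dual 4-form *ψ -/
  ψdual : ∀ p, (T p) [⋀^Fin 4]→ₗ[ℝ] ℝ
  /-- G₂-structure: around every point there is an orthonormal coframe in which ψ and *ψ
  take their standard forms -/
  adapted : ∀ p, ∃ ι : T p ≃ₗᵢ[ℝ] EuclideanSpace ℝ (Fin 7),
    ψ p = assocForm.compLinearMap ι.toLinearEquiv.toLinearMap ∧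
    ψdual p = coassocForm.compLinearMap ι.toLinearEquiv.toLinearMap

attribute [instance] G2StructureManifold.instN G2StructureManifold.instI

/-- The cross product on ℝ⁷ determined by the associative form. -/
def g2cross (x y : EuclideanSpace ℝ (Fin 7)) : EuclideanSpace ℝ (Fin 7) :=
  !₂[(x 1 * y 2 - x 2 * y 1) + (x 3 * y 4 - x 4 * y 3) - (x 5 * y 6 - x 6 * y 5),
     (x 2 * y 0 - x 0 * y 2) + (x 3 * y 5 - x 5 * y 3) + (x 4 * y 6 - x 6 * y 4),
     (x 0 * y 1 - x 1 * y 0) + (x 3 * y 6 - x 6 * y 3) - (x 4 * y 5 - x 5 * y 4),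
     (x 4 * y 0 - x 0 * y 4) + (x 5 * y 1 - x 1 * y 5) + (x 6 * y 2 - x 2 * y 6),
     (x 0 * y 3 - x 3 * y 0) + (x 6 * y 1 - x 1 * y 6) - (x 5 * y 2 - x 2 * y 5),
     -(x 6 * y 0 - x 0 * y 6) + (x 1 * y 3 - x 3 * y 1) - (x 2 * y 4 - x 4 * y 2),
     -(x 0 * y 5 - x 5 * y 0) + (x 1 * y 4 - x 4 * y 1) + (x 2 * y 3 - x 3 * y 2)]

/-- The Euclidean inner product in coordinates. -/
theorem inner7 (x y : EuclideanSpace ℝ (Fin 7)) :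
    inner ℝ x y = x 0 * y 0 + x 1 * y 1 + x 2 * y 2 + x 3 * y 3 + x 4 * y 4 + x 5 * y 5
      + x 6 * y 6 := by
  simp [PiLp.inner_apply, Fin.sum_univ_succ]
  ring

theorem elemForm_apply {k : ℕ} (e : Fin k → Fin 7) (v : Fin k → EuclideanSpace ℝ (Fin 7)) :
    elemForm e v = (Matrix.of fun i j => v i (e j)).det := by
  rw [elemForm, AlternatingMap.compLinearMap_apply, Pi.basisFun_det_apply]
  rfl

theorem assocForm_eq (v : Fin 3 → EuclideanSpace ℝ (Fin 7)) :
    assocForm v = inner ℝ (g2cross (v 0) (v 1)) (v 2) := by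
  simp only [assocForm, AlternatingMap.add_apply, AlternatingMap.sub_apply, elemForm_apply,
    Matrix.det_fin_three, inner7]
  simp [g2cross]
  ring

theorem det_four (A : Matrix (Fin 4) (Fin 4) ℝ) : A.det =
    (A 0 0 * A 1 1 - A 0 1 * A 1 0) * (A 2 2 * A 3 3 - A 2 3 * A 3 2)
    - (A 0 0 * A 1 2 - A 0 2 * A 1 0) * (A 2 1 * A 3 3 - A 2 3 * A 3 1)
    + (A 0 0 * A 1 3 - A 0 3 * A 1 0) * (A 2 1 * A 3 2 - A 2 2 * A 3 1)
    + (A 0 1 * A 1 2 - A 0 2 * A 1 1) * (A 2 0 * A 3 3 - A 2 3 * A 3 0)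
    - (A 0 1 * A 1 3 - A 0 3 * A 1 1) * (A 2 0 * A 3 2 - A 2 2 * A 3 0)
    + (A 0 2 * A 1 3 - A 0 3 * A 1 2) * (A 2 0 * A 3 1 - A 2 1 * A 3 0) := by
  rw [Matrix.det_succ_row_zero]
  simp [Fin.sum_univ_succ, Matrix.det_fin_three, Fin.succAbove, Matrix.submatrix]
  ring

theorem coassocForm_eq (v : Fin 4 → EuclideanSpace ℝ (Fin 7)) :
    coassocForm v = inner ℝ (v 0) (v 2) * inner ℝ (v 1) (v 3)
      - inner ℝ (v 0) (v 3) * inner ℝ (v 1) (v 2)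
      - inner ℝ (g2cross (v 0) (v 1)) (g2cross (v 2) (v 3)) := by
  simp only [coassocForm, AlternatingMap.add_apply, AlternatingMap.sub_apply, elemForm_apply,
    det_four, inner7]
  simp [g2cross]
  ring

theorem g2cross_inner_g2cross (x y z : EuclideanSpace ℝ (Fin 7)) :
    inner ℝ (g2cross x y) (g2cross x z) =
      inner ℝ x x * inner ℝ y z - inner ℝ x y * inner ℝ x z := by
  simp only [inner7]
  simp [g2cross]
  ring

theorem g2cross_cycle (x y z : EuclideanSpace ℝ (Fin 7)) :
    inner ℝ (g2cross x y) z = inner ℝ (g2cross y z) x := by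
  simp only [inner7]
  simp [g2cross]
  ring

theorem g2cross_swap (x y : EuclideanSpace ℝ (Fin 7)) : g2cross x y = - g2cross y x := by
  ext i
  fin_cases i <;> simp [g2cross] <;> ring

theorem g2cross_inner_left (x y : EuclideanSpace ℝ (Fin 7)) : inner ℝ (g2cross x y) x = 0 := by
  simp only [inner7]
  simp [g2cross]
  ring

theorem exists_perm_extend : ∀ e : Fin 3 → Fin 4, Function.Injective e →
    ∃ σ : Equiv.Perm (Fin 4), ∀ i : Fin 3, e i = σ i.castSucc := by
  intro e he
  obtain ⟨d, hd⟩ : ∃ d, ∀ i, e i ≠ d := by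
    by_contra! h
    have := Fintype.card_le_of_surjective e h
    simp at this
  have hinj : Function.Injective (Fin.snoc e d : Fin 4 → Fin 4) := by
    rw [Fin.snoc_injective_iff]
    exact ⟨he, by rintro ⟨i, hi⟩; exact hd i hi⟩
  refine ⟨Equiv.ofBijective _ (Finite.injective_iff_bijective.mp hinj), fun i => ?_⟩
  simp

/-- Calibrated frames are annihilated by the associative form. -/
theorem assoc_zero_of_coassoc (v : Fin 4 → EuclideanSpace ℝ (Fin 7)) (hv : Orthonormal ℝ v)
    (h : coassocForm v ^ 2 = 1) : assocForm (fun i : Fin 3 => v i.castSucc) = 0 := by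
  have ho := orthonormal_iff_ite.mp hv
  have key := coassocForm_eq v
  have n1 := g2cross_inner_g2cross (v 0) (v 1) (v 1)
  have n2 := g2cross_inner_g2cross (v 2) (v 3) (v 3)
  rw [assocForm_eq]
  change inner ℝ (g2cross (v 0) (v 1)) (v 2) = 0
  simp [ho, hv.norm_eq_one] at key n1 n2
  have hz := g2cross_inner_left (v 2) (v 3)
  generalize g2cross (v 0) (v 1) = a at *
  generalize g2cross (v 2) (v 3) = b at *
  set c := coassocForm v
  have hab : a + c • b = 0 := by
    rw [← norm_eq_zero, ← sq_eq_zero_iff, ← real_inner_self_eq_norm_sq]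
    simp only [inner_add_left, inner_add_right, real_inner_smul_left, real_inner_smul_right,
      real_inner_comm a b]
    simp
    have key' : inner ℝ a b = -c := by rw [key]; ring
    rw [key']
    have m1 : ‖a‖ ^ 2 = 1 := by rcases n1 with h | h <;> simp [h]
    have m2 : ‖b‖ ^ 2 = 1 := by rcases n2 with h | h <;> simp [h]
    rw [m1, m2]
    nlinarith
  have : a = -(c • b) := eq_neg_of_add_eq_zero_left hab
  rw [this, inner_neg_left, real_inner_smul_left, hz]; simp

/-- Frames annihilated by the associative form are calibrated up to sign. -/
theorem coassoc_of_assoc_zero (v : Fin 4 → EuclideanSpace ℝ (Fin 7)) (hv : Orthonormal ℝ v)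
    (h : ∀ i j k, inner ℝ (g2cross (v i) (v j)) (v k) = 0) : coassocForm v ^ 2 = 1 := by
  have ho := orthonormal_iff_ite.mp hv
  have key := coassocForm_eq v
  have n2 := g2cross_inner_g2cross (v 2) (v 3) (v 3)
  have e02 : inner ℝ (g2cross (v 0) (v 2)) (g2cross (v 2) (v 3)) = 0 := by
    rw [g2cross_swap (v 0), inner_neg_left, g2cross_inner_g2cross]; simp [ho]
  have e03 : inner ℝ (g2cross (v 0) (v 3)) (g2cross (v 2) (v 3)) = 0 := by
    rw [g2cross_swap (v 0), g2cross_swap (v 2), inner_neg_left, inner_neg_right,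
      g2cross_inner_g2cross]; simp [ho]
  simp [ho, hv.norm_eq_one] at key n2
  let w : Fin 7 → EuclideanSpace ℝ (Fin 7) :=
    ![v 0, v 1, v 2, v 3, g2cross (v 0) (v 1), g2cross (v 0) (v 2), g2cross (v 0) (v 3)]
  have hw : Orthonormal ℝ w := by
    rw [orthonormal_iff_ite]
    intro i j
    have h' : ∀ i j k, inner ℝ (v k) (g2cross (v i) (v j)) = 0 := fun i j k => by
      rw [real_inner_comm]; exact h i j k
    fin_cases i <;> fin_cases j <;> simp [w, ho, h, h', g2cross_inner_g2cross, -inner_self_eq_norm_sq_to_K]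
  let B := OrthonormalBasis.mk hw (by
    rw [hw.linearIndependent.span_eq_top_of_card_eq_finrank (by simp)])
  have hp := B.sum_inner_mul_inner (g2cross (v 2) (v 3)) (g2cross (v 2) (v 3))
  simp [B, Fin.sum_univ_succ, w, h] at hp
  rw [real_inner_comm] at e02 e03 
  have m2 : ‖g2cross (v 2) (v 3)‖ ^ 2 = 1 := by rcases n2 with h | h <;> simp [h]
  simp only [m2, e02, e03] at hp
  rw [key]
  rw [real_inner_comm] at hp
  nlinarith

/-- Let (M, g, ψ) be a seven-dimensional Riemannian manifold with
G₂-structure and let X be a four-dimensional submanifold of M, given by its point set S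
and its tangent distribution τ.  Then X is a generalized co-associative calibration —
calibrated with respect to *ψ for a suitable orientation of X, i.e. at every point of X
some orthonormal frame of the tangent 4-plane evaluates to 1 under *ψ, so that *ψ
restricts to the volume form of X — if and only if ψ|_X = 0, i.e. ψ vanishes on all
triples of vectors tangent to X. -/
theorem coassociative_iff_psi_vanishes (X : G2StructureManifold)
    (S : Set X.M) (τ : ∀ p, Submodule ℝ (X.T p))
    (hτ : ∀ p ∈ S, Module.finrank ℝ (τ p) = 4) :
    ((∀ p ∈ S, ∃ v : Fin 4 → X.T p,
        Orthonormal ℝ v ∧ (∀ i, v i ∈ τ p) ∧ X.ψdual p v = 1) ↔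
      (∀ p ∈ S, ∀ w : Fin 3 → X.T p, (∀ i, w i ∈ τ p) → X.ψ p w = 0)) := by
  have trans : ∀ p (ι : X.T p ≃ₗᵢ[ℝ] EuclideanSpace ℝ (Fin 7)) (v : Fin 4 → X.T p),
      Orthonormal ℝ v → Orthonormal ℝ (fun i => ι (v i)) :=
    fun p ι v hv => hv.comp_linearIsometryEquiv ι
  constructor
  · intro H p hp w hw
    obtain ⟨v, hv, hvτ, hv1⟩ := H p hp
    obtain ⟨ι, h3, h4⟩ := X.adapted p
    have hι := trans p ι v hv
    have hc : coassocForm (fun i => ι (v i)) = 1 := by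
      rw [h4] at hv1
      exact hv1
    let u : Fin 4 → τ p := fun i => ⟨v i, hvτ i⟩
    have hu : LinearIndependent ℝ u :=
      LinearIndependent.of_comp (τ p).subtype hv.linearIndependent
    let b := basisOfLinearIndependentOfCardEqFinrank hu (by simp [hτ p hp])
    have hz : (X.ψ p).compLinearMap (τ p).subtype = 0 := by
      refine b.ext_alternating fun e he => ?_
      obtain ⟨σ, hσ⟩ := exists_perm_extend e he
      have hsq : coassocForm ((fun i => ι (v i)) ∘ σ) ^ 2 = 1 := by
        rw [AlternatingMap.map_perm, hc]
        rcases Int.units_eq_one_or (Equiv.Perm.sign σ) with h | h <;> simp [h]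
      have := assoc_zero_of_coassoc _ (hι.comp σ σ.injective) hsq
      rw [h3]
      simp only [AlternatingMap.compLinearMap_apply, AlternatingMap.zero_apply]
      convert this using 2
      ext1 i
      simp [b, u, hσ]
    exact DFunLike.congr_fun hz (fun i => (⟨w i, hw i⟩ : τ p))
  · intro H p hp
    obtain ⟨ι, h3, h4⟩ := X.adapted p
    have : FiniteDimensional ℝ (τ p) := Module.finite_of_finrank_pos (by rw [hτ p hp]; norm_num)
    let b := (stdOrthonormalBasis ℝ (τ p)).reindex (finCongr (hτ p hp))
    let v : Fin 4 → X.T p := fun i => (b i : X.T p)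
    have hv : Orthonormal ℝ v := b.orthonormal.comp_linearIsometry (τ p).subtypeₗᵢ
    have hvτ : ∀ i, v i ∈ τ p := fun i => (b i).2
    have hι := trans p ι v hv
    have hsq : coassocForm (fun i => ι (v i)) ^ 2 = 1 := by
      refine coassoc_of_assoc_zero _ hι fun i j k => ?_
      have h0 := H p hp ![v i, v j, v k] (by intro l; fin_cases l <;> simp [hvτ])
      rw [h3, AlternatingMap.compLinearMap_apply, assocForm_eq] at h0
      exact h0
    have hd : ∀ u, X.ψdual p u = coassocForm (fun i => ι (u i)) := by
      intro u; rw [h4]; rfl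
    rcases (sq_eq_sq_iff_eq_or_eq_neg.mp (hsq.trans (one_pow 2).symm)) with h | h
    · exact ⟨v, hv, hvτ, by rw [hd, h]⟩
    · refine ⟨v ∘ Equiv.swap 0 1, hv.comp _ (Equiv.injective _), fun i => hvτ _, ?_⟩
      rw [AlternatingMap.map_perm, hd, h]
      simp
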